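/- Let a, b, x, t be complex numbers with b not a nonpositive integer. Then the generating relation obtained from the one-parameter subgroup raising the parameter b holds: e^{−t} ₁F₁(a;b; x + t) = Σ_{ℓ=0}^∞ ((b−a)_ℓ / (ℓ! (b)_ℓ)) ₁F₁(a; b+ℓ; x) (−t)^ℓ, the series converging for all t ∈ ℂ. -/

import Mathlib

open Complex

/-- Pochhammer symbol `(q)_n = q (q+1) ⋯ (q+n-1)`. -/
noncomputable def poch (q : ℂ) (n : ℕ) : ℂ := (ascPochhammer ℂ n).eval q

/-- Confluent hypergeometric function `₁F₁(a; b; x) = ∑ₛ (a)ₛ xˢ / (s! (b)ₛ)`. -/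
noncomputable def oneF1 (a b x : ℂ) : ℂ :=
  ∑' s : ℕ, poch a s * x ^ s / ((s.factorial : ℂ) * poch b s)

/-!
Multiplication by `e⁻ʸ` turns the operator `1 - d/dy`, which raises the parameter `b` of
`₁F₁(a; b; y)`, into a plain derivative:
`d/dy (e⁻ʸ ₁F₁(a; b; y)) = -((b - a) / b) e⁻ʸ ₁F₁(a; b + 1; y)`.
Iterating, the generating relation is the Taylor expansion at `x` of the entire function
`e⁻ʸ ₁F₁(a; b; y)`, evaluated at `x + t` and multiplied by `eˣ`.
-/

open Filter Topology

lemma summable_of_succ_eq_mul {R : Type*} [SeminormedRing R] [CompleteSpace R] {f ρ : ℕ → R}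
    (hρ : Tendsto ρ atTop (𝓝 0)) (hf : ∀ n, f (n + 1) = ρ n * f n) : Summable f := by
  refine summable_of_ratio_norm_eventually_le (r := 1 / 2) (by norm_num) ?_
  filter_upwards [hρ.norm.eventually_le_const (by norm_num : ‖(0 : R)‖ < 1 / 2)] with n hn
  calc ‖f (n + 1)‖ = ‖ρ n * f n‖ := by rw [hf]
    _ ≤ ‖ρ n‖ * ‖f n‖ := norm_mul_le _ _
    _ ≤ 1 / 2 * ‖f n‖ := by gcongr

lemma hasDerivAt_tsum_mul_pow {𝕜 : Type*} [RCLike 𝕜] {c : ℕ → 𝕜} {r x : 𝕜}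
    (hr : Summable fun n : ℕ => (n + 1) * c (n + 1) * r ^ n) (hx : ‖x‖ < ‖r‖) :
    HasDerivAt (fun y => ∑' n, c n * y ^ n) (∑' n : ℕ, (n + 1) * c (n + 1) * x ^ n) x := by
  have shift (y : 𝕜) (n : ℕ) : c (n + 1) * (((n + 1 : ℕ) : 𝕜) * y ^ (n + 1 - 1)) =
      (n + 1) * c (n + 1) * y ^ n := by
    rw [Nat.add_sub_cancel]
    push_cast
    ring
  have summable_norm {y : 𝕜} (hy : ‖y‖ ≤ ‖r‖) :
      Summable fun n : ℕ => ‖c n * ((n : 𝕜) * y ^ (n - 1))‖ := by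
    rw [← summable_nat_add_iff 1]
    refine hr.norm.of_nonneg_of_le (fun _ => norm_nonneg _) fun n => ?_
    rw [shift, norm_mul, norm_mul _ (r ^ n), norm_pow, norm_pow]
    gcongr
  have summable_zero : Summable fun n => c n * (0 : 𝕜) ^ n :=
    summable_of_ne_finset_zero (s := {0}) fun n hn => by
      rw [zero_pow (Finset.notMem_singleton.1 hn), mul_zero]
  have hderiv := hasDerivAt_tsum_of_isPreconnected (summable_norm le_rfl) Metric.isOpen_ball
    (convex_ball (0 : 𝕜) ‖r‖).isPreconnected
    (fun n y _ => (hasDerivAt_pow n y).const_mul (c n))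
    (fun n y hy => by
      have : ‖y‖ ≤ ‖r‖ := (mem_ball_zero_iff.1 hy).le
      simp only [norm_mul, norm_pow]
      gcongr)
    (Metric.mem_ball_self ((norm_nonneg x).trans_lt hx)) summable_zero (mem_ball_zero_iff.2 hx)
  refine hderiv.congr_deriv ?_
  rw [(summable_norm hx.le).of_norm.tsum_eq_zero_add]
  simp only [shift, Nat.cast_zero, zero_mul, mul_zero, zero_add]

lemma poch_zero (q : ℂ) : poch q 0 = 1 := by simp [poch]

lemma poch_succ (q : ℂ) (n : ℕ) : poch q (n + 1) = poch q n * (q + n) :=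
  ascPochhammer_succ_eval n q

lemma poch_succ_left (q : ℂ) (n : ℕ) : poch q (n + 1) = q * poch (q + 1) n := by
  simp [poch, ascPochhammer_succ_left, Polynomial.eval_comp]

lemma poch_ne_zero {b : ℂ} (hb : ∀ n : ℕ, b ≠ -(n : ℂ)) (n : ℕ) : poch b n ≠ 0 := by
  rw [poch, Ne, ascPochhammer_eval_eq_zero_iff]
  rintro ⟨k, -, hk⟩
  exact hb k (eq_neg_of_add_eq_zero_right (by rw [hk, neg_add_cancel]))

lemma add_natCast_ne_neg_natCast {b : ℂ} (hb : ∀ n : ℕ, b ≠ -(n : ℂ)) (m n : ℕ) :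
    b + m ≠ -(n : ℂ) := by
  intro h
  apply hb (m + n)
  push_cast
  linear_combination h

/-- The Taylor coefficient `(a)ₙ / (n! (b)ₙ)` of `₁F₁(a; b; x)` at `x = 0`. -/
noncomputable def oneF1Coeff (a b : ℂ) (n : ℕ) : ℂ :=
  poch a n / ((n.factorial : ℂ) * poch b n)

lemma oneF1_eq_tsum (a b x : ℂ) : oneF1 a b x = ∑' n, oneF1Coeff a b n * x ^ n := by
  simp only [oneF1, oneF1Coeff, div_mul_eq_mul_div]

lemma oneF1Coeff_succ (a b : ℂ) (n : ℕ) :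
    oneF1Coeff a b (n + 1) = (a + n) / (b + n) * (1 / ((n : ℂ) + 1)) * oneF1Coeff a b n := by
  rw [oneF1Coeff, oneF1Coeff, poch_succ, poch_succ, Nat.factorial_succ, ← mul_div_mul_comm,
    ← mul_div_mul_comm]
  push_cast
  ring

lemma succ_mul_oneF1Coeff_succ (a b : ℂ) (n : ℕ) :
    (n + 1) * oneF1Coeff a b (n + 1) = a / b * oneF1Coeff (a + 1) (b + 1) n := by
  have hn : (n : ℂ) + 1 ≠ 0 := Nat.cast_add_one_ne_zero n
  rw [oneF1Coeff, oneF1Coeff, poch_succ_left, poch_succ_left, Nat.factorial_succ]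
  push_cast
  field_simp

lemma oneF1Coeff_contiguous {b : ℂ} (hb : ∀ n : ℕ, b ≠ -(n : ℂ)) (a : ℂ) (n : ℕ) :
    a / b * oneF1Coeff (a + 1) (b + 1) n =
      oneF1Coeff a b n - (b - a) / b * oneF1Coeff a (b + 1) n := by
  have hb₀ : b ≠ 0 := by simpa using hb 0
  have hbn : b + n ≠ 0 := fun h => hb n (eq_neg_of_add_eq_zero_left h)
  have hpoch : poch b n ≠ 0 := poch_ne_zero hb n
  have hfact : (n.factorial : ℂ) ≠ 0 := Nat.cast_ne_zero.2 n.factorial_ne_zero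
  have raise_a : a * poch (a + 1) n = poch a n * (a + n) := by
    rw [← poch_succ_left, poch_succ]
  have raise_b : poch (b + 1) n = poch b n * (b + n) / b := by
    rw [← poch_succ, poch_succ_left, mul_div_cancel_left₀ _ hb₀]
  simp only [oneF1Coeff, raise_b]
  field_simp
  linear_combination raise_a

lemma summable_oneF1Coeff_mul_pow (a b x : ℂ) : Summable fun n => oneF1Coeff a b n * x ^ n := by
  have hratio : Tendsto (fun n : ℕ => (a + 1 * n) / (b + 1 * n) * (1 / ((n : ℂ) + 1)) * x)
      atTop (𝓝 (1 / 1 * 0 * x)) :=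
    ((tendsto_add_mul_div_add_mul_atTop_nhds a b 1 one_ne_zero).mul
      tendsto_one_div_add_atTop_nhds_zero_nat).mul_const x
  simp only [one_mul, mul_zero, zero_mul] at hratio
  refine summable_of_succ_eq_mul hratio fun n => ?_
  rw [oneF1Coeff_succ, pow_succ]
  ring

lemma hasDerivAt_oneF1 (a b x : ℂ) :
    HasDerivAt (oneF1 a b) (a / b * oneF1 (a + 1) (b + 1) x) x := by
  have hsum (y : ℂ) : Summable fun n : ℕ => (n + 1) * oneF1Coeff a b (n + 1) * y ^ n := by
    simpa only [succ_mul_oneF1Coeff_succ, mul_assoc] using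
      (summable_oneF1Coeff_mul_pow (a + 1) (b + 1) y).mul_left (a / b)
  obtain ⟨r, hr⟩ := NormedField.exists_lt_norm ℂ ‖x‖
  rw [funext (oneF1_eq_tsum a b), oneF1_eq_tsum, ← tsum_mul_left]
  simpa only [succ_mul_oneF1Coeff_succ, mul_assoc] using hasDerivAt_tsum_mul_pow (hsum r) hr

lemma oneF1_contiguous {b : ℂ} (hb : ∀ n : ℕ, b ≠ -(n : ℂ)) (a x : ℂ) :
    a / b * oneF1 (a + 1) (b + 1) x = oneF1 a b x - (b - a) / b * oneF1 a (b + 1) x := by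
  simp only [oneF1_eq_tsum, ← tsum_mul_left]
  rw [← (summable_oneF1Coeff_mul_pow a b x).tsum_sub
    ((summable_oneF1Coeff_mul_pow a (b + 1) x).mul_left _)]
  simp only [← mul_assoc, oneF1Coeff_contiguous hb, sub_mul]

lemma hasDerivAt_exp_neg_mul_oneF1 {b : ℂ} (hb : ∀ n : ℕ, b ≠ -(n : ℂ)) (a x : ℂ) :
    HasDerivAt (fun y => exp (-y) * oneF1 a b y)
      (-((b - a) / b) * (exp (-x) * oneF1 a (b + 1) x)) x := by
  refine ((hasDerivAt_neg x).cexp.mul (hasDerivAt_oneF1 a b x)).congr_deriv ?_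
  rw [oneF1_contiguous hb]
  ring

lemma iteratedDeriv_exp_neg_mul_oneF1 {b : ℂ} (hb : ∀ n : ℕ, b ≠ -(n : ℂ)) (a : ℂ) (n : ℕ) :
    iteratedDeriv n (fun y => exp (-y) * oneF1 a b y) =
      fun y => (-1) ^ n * (poch (b - a) n / poch b n) * (exp (-y) * oneF1 a (b + n) y) := by
  induction n with
  | zero => simp [poch_zero]
  | succ n ih =>
    funext y
    have hderiv := hasDerivAt_exp_neg_mul_oneF1 (add_natCast_ne_neg_natCast hb n) a y
    rw [iteratedDeriv_succ, ih, (hderiv.const_mul _).deriv, poch_succ, poch_succ, Nat.cast_succ,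
      ← add_assoc, mul_div_mul_comm, pow_succ]
    ring

lemma hasSum_exp_neg_mul_oneF1 {b : ℂ} (hb : ∀ n : ℕ, b ≠ -(n : ℂ)) (a x t : ℂ) :
    HasSum (fun n => exp (-x) * (oneF1Coeff (b - a) b n * oneF1 a (b + n) x * (-t) ^ n))
      (exp (-(x + t)) * oneF1 a b (x + t)) := by
  have hentire : Differentiable ℂ fun y => exp (-y) * oneF1 a b y :=
    fun y => (hasDerivAt_exp_neg_mul_oneF1 hb a y).differentiableAt
  refine (hasSum_taylorSeries_of_entire hentire x (x + t)).congr_fun fun n => ?_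
  rw [iteratedDeriv_exp_neg_mul_oneF1 hb, add_sub_cancel_left, neg_pow t n, oneF1Coeff,
    smul_eq_mul, smul_eq_mul]
  ring

theorem stmt4 (a b x t : ℂ) (hb : ∀ n : ℕ, b ≠ -(n : ℂ)) :
    HasSum (fun ℓ : ℕ => poch (b - a) ℓ / ((ℓ.factorial : ℂ) * poch b ℓ) * oneF1 a (b + ℓ) x * (-t) ^ ℓ)
      (Complex.exp (-t) * oneF1 a b (x + t)) := by
  have hexp : exp (-(x + t)) = exp (-x) * exp (-t) := by rw [neg_add, exp_add]
  have hsum := hasSum_exp_neg_mul_oneF1 hb a x t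
  rw [hexp, mul_assoc] at hsum
  exact (hasSum_mul_left_iff (exp_ne_zero (-x))).1 hsum
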